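/- For an almost quaternion-Hermitian 4n-manifold M with n > 1, define ξ_X Y = −(1/4) Σ_{A=I,J,K} A(∇_X A)Y + (1/2) Σ_{A=I,J,K} λ_A(X) A Y. Then ∇^aqH = ∇ + ξ is the minimal Sp(n)Sp(1)-connection: (1) ∇^aqH is a metric connection (∇^aqH g = 0); (2) for any local adapted basis I,J,K one has (∇^aqH_X I)Y = λ_K(X) JY − λ_J(X) KY, together with the two equations obtained by cyclically permuting (I,J,K); (3) ξ takes values in T*M ⊗ (sp(n)+sp(1))^⊥, i.e. Σ_{A=I,J,K} A ξ_X (A Y) = ξ_X Y and Σ_i ⟨ξ_X e_i, A e_i⟩ = 0 for A = I,J,K and any local orthonormal frame (e_i). -/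

import Mathlib

/-!  Synthetic (Koszul-style) model of an almost quaternion-Hermitian `4n`-manifold.

`C` plays the role of the commutative ℝ-algebra of smooth functions and `V` that of
the `C`-module of vector fields, equipped with a directional derivative `D`, a Lie
bracket, a Riemannian metric `g` together with its Levi-Civita connection `nab`
(characterised by being torsion-free and metric), a local adapted basis `I, J, K`
of anticommuting almost complex structures with `K = I J`, each compatible with the
metric, and a (local) orthonormal frame.  -/

noncomputable section

open scoped BigOperators

structure AQH (n : ℕ) (C : Type*) (V : Type*) [CommRing C] [Algebra ℝ C]
    [AddCommGroup V] [Module C V] where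
  /-- derivative of a function along a vector field -/
  D : V → C → C
  D_add : ∀ X f g, D X (f + g) = D X f + D X g
  D_mul : ∀ X f g, D X (f * g) = f * D X g + g * D X f
  D_const : ∀ X (r : ℝ), D X (algebraMap ℝ C r) = 0
  D_addX : ∀ X Y f, D (X + Y) f = D X f + D Y f
  D_smulX : ∀ (f : C) (X : V) (h : C), D (f • X) h = f * D X h
  /-- the Lie bracket of vector fields -/
  bracket : V → V → V
  bracket_skew : ∀ X Y, bracket X Y = -bracket Y X
  bracket_add : ∀ X Y Z, bracket X (Y + Z) = bracket X Y + bracket X Z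
  bracket_smul : ∀ X (f : C) Y, bracket X (f • Y) = f • bracket X Y + (D X f) • Y
  bracket_jacobi : ∀ X Y Z,
    bracket X (bracket Y Z) + bracket Y (bracket Z X) + bracket Z (bracket X Y) = 0
  D_bracket : ∀ X Y f, D (bracket X Y) f = D X (D Y f) - D Y (D X f)
  /-- the Riemannian metric -/
  g : V → V → C
  g_symm : ∀ X Y, g X Y = g Y X
  g_add : ∀ X Y Z, g (X + Y) Z = g X Z + g Y Z
  g_smul : ∀ (f : C) X Y, g (f • X) Y = f * g X Y
  /-- the Levi-Civita connection -/
  nab : V → V → V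
  nab_addX : ∀ X Y Z, nab (X + Y) Z = nab X Z + nab Y Z
  nab_smulX : ∀ (f : C) X Y, nab (f • X) Y = f • nab X Y
  nab_add : ∀ X Y Z, nab X (Y + Z) = nab X Y + nab X Z
  nab_leibniz : ∀ X (f : C) Y, nab X (f • Y) = f • nab X Y + (D X f) • Y
  torsion_free : ∀ X Y, nab X Y - nab Y X = bracket X Y
  nab_metric : ∀ X Y Z, D X (g Y Z) = g (nab X Y) Z + g Y (nab X Z)
  /-- the (local) adapted basis of almost complex structures -/
  I : V → V
  J : V → V
  K : V → V
  I_lin : ∀ (f : C) X Y, I (f • X + Y) = f • I X + I Y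
  J_lin : ∀ (f : C) X Y, J (f • X + Y) = f • J X + J Y
  K_lin : ∀ (f : C) X Y, K (f • X + Y) = f • K X + K Y
  I_sq : ∀ X, I (I X) = -X
  J_sq : ∀ X, J (J X) = -X
  K_def : ∀ X, K X = I (J X)
  anticomm : ∀ X, I (J X) = -J (I X)
  I_metric : ∀ X Y, g (I X) (I Y) = g X Y
  J_metric : ∀ X Y, g (J X) (J Y) = g X Y
  /-- a (local) orthonormal frame -/
  frame : Fin (4 * n) → V
  frame_orthonormal : ∀ i j, g (frame i) (frame j) = if i = j then 1 else 0
  frame_span : ∀ X, X = ∑ i, g X (frame i) • frame i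

namespace AQH

section ops

variable {C V : Type*} [CommRing C]

/-- the operator `A_(1)` on covariant 3-tensors -/
def op1 (A : V → V) (ψ : V → V → V → C) : V → V → V → C := fun X Y Z => -ψ (A X) Y Z

/-- the operator `A_(2)` on covariant 3-tensors -/
def op2 (A : V → V) (ψ : V → V → V → C) : V → V → V → C := fun X Y Z => -ψ X (A Y) Z

/-- the operator `A_(3)` on covariant 3-tensors -/
def op3 (A : V → V) (ψ : V → V → V → C) : V → V → V → C := fun X Y Z => -ψ X Y (A Z)

/-- the operator `A_(12) = A_(1) A_(2)` on covariant 3-tensors -/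
def op12 (A : V → V) (ψ : V → V → V → C) : V → V → V → C := fun X Y Z => ψ (A X) (A Y) Z

/-- the operator `A_(13) = A_(1) A_(3)` on covariant 3-tensors -/
def op13 (A : V → V) (ψ : V → V → V → C) : V → V → V → C := fun X Y Z => ψ (A X) Y (A Z)

/-- the operator `A_(23) = A_(2) A_(3)` on covariant 3-tensors -/
def op23 (A : V → V) (ψ : V → V → V → C) : V → V → V → C := fun X Y Z => ψ X (A Y) (A Z)

/-- the operator `𝓛_A = A_(12) + A_(13) + A_(23)` on three-forms -/
def calL (A : V → V) (ψ : V → V → V → C) : V → V → V → C :=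
  fun X Y Z => op12 A ψ X Y Z + op13 A ψ X Y Z + op23 A ψ X Y Z

/-- the action `(A ν)(X) = -ν (A X)` of `A` on a one-form -/
def act1 (A : V → V) (ν : V → C) : V → C := fun X => -ν (A X)

/-- the action `(A ψ)(X,Y,Z) = -ψ(AX,AY,AZ)` of `A` on a three-form -/
def act3 (A : V → V) (ψ : V → V → V → C) : V → V → V → C :=
  fun X Y Z => -ψ (A X) (A Y) (A Z)

/-- wedge product of two one-forms -/
def wedge11 (α β : V → C) : V → V → C := fun X Y => α X * β Y - α Y * β X

/-- wedge product of a one-form and a two-form -/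
def wedge12 (ν : V → C) (ω : V → V → C) : V → V → V → C :=
  fun X Y Z => ν X * ω Y Z - ν Y * ω X Z + ν Z * ω X Y

/-- wedge product of two two-forms -/
def wedge22 (α β : V → V → C) : V → V → V → V → C := fun X Y Z W =>
  α X Y * β Z W - α X Z * β Y W + α X W * β Y Z
    + α Z W * β X Y - α Y W * β X Z + α Y Z * β X W

/-- a (0,3)-tensor is an alternating three-form -/
def IsAlt3 (T : V → V → V → C) : Prop :=
  (∀ X Y Z, T Y X Z = -T X Y Z) ∧ (∀ X Y Z, T X Z Y = -T X Y Z)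

variable [AddCommGroup V] [Module C V]

/-- `C`-linearity (tensoriality) of a three-form in its first argument -/
def Lin3 (T : V → V → V → C) : Prop :=
  ∀ (f : C) X X' Y Z, T (f • X + X') Y Z = f * T X Y Z + T X' Y Z

/-- `C`-linearity (tensoriality) of a one-form -/
def Lin1 (ν : V → C) : Prop := ∀ (f : C) X X', ν (f • X + X') = f * ν X + ν X'

end ops

section derived

variable {n : ℕ} {C V : Type*} [CommRing C] [Algebra ℝ C] [AddCommGroup V] [Module C V]
  [Module ℝ V] [IsScalarTower ℝ C V]

variable (M : AQH n C V)

/-- the Kähler form `ω_A(X,Y) = g(X, A Y)` -/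
def omega (A : V → V) : V → V → C := fun X Y => M.g X (A Y)

/-- `(∇_X A) Y` -/
def nabA (A : V → V) : V → V → V := fun X Y => M.nab X (A Y) - A (M.nab X Y)

/-- covariant derivative of a 2-form: `(∇_X ψ)(Y,Z)` -/
def nab2 (ψ : V → V → C) : V → V → V → C :=
  fun X Y Z => M.D X (ψ Y Z) - ψ (M.nab X Y) Z - ψ Y (M.nab X Z)

/-- covariant derivative of a 4-form -/
def nab4 (ψ : V → V → V → V → C) : V → V → V → V → V → C :=
  fun X Y Z W U => M.D X (ψ Y Z W U) - ψ (M.nab X Y) Z W U - ψ Y (M.nab X Z) W U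
    - ψ Y Z (M.nab X W) U - ψ Y Z W (M.nab X U)

/-- exterior derivative of a one-form -/
def d1 (ν : V → C) : V → V → C :=
  fun X Y => M.D X (ν Y) - M.D Y (ν X) - ν (M.bracket X Y)

/-- exterior derivative of a two-form -/
def d2 (ψ : V → V → C) : V → V → V → C :=
  fun X Y Z => M.D X (ψ Y Z) - M.D Y (ψ X Z) + M.D Z (ψ X Y)
    - ψ (M.bracket X Y) Z + ψ (M.bracket X Z) Y - ψ (M.bracket Y Z) X

/-- exterior derivative of a four-form -/
def d4 (ψ : V → V → V → V → C) : V → V → V → V → V → C := fun X Y Z W U =>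
  M.D X (ψ Y Z W U) - M.D Y (ψ X Z W U) + M.D Z (ψ X Y W U) - M.D W (ψ X Y Z U)
      + M.D U (ψ X Y Z W)
    - ψ (M.bracket X Y) Z W U + ψ (M.bracket X Z) Y W U - ψ (M.bracket X W) Y Z U
      + ψ (M.bracket X U) Y Z W
    - ψ (M.bracket Y Z) X W U + ψ (M.bracket Y W) X Z U - ψ (M.bracket Y U) X Z W
    - ψ (M.bracket Z W) X Y U + ψ (M.bracket Z U) X Y W
    - ψ (M.bracket W U) X Y Z

/-- the Nijenhuis tensor `N_A(X,Y)` -/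
def nijV (A : V → V) : V → V → V := fun X Y =>
  M.bracket X Y + A (M.bracket (A X) Y) + A (M.bracket X (A Y)) - M.bracket (A X) (A Y)

/-- the Nijenhuis `(0,3)`-tensor `N_A(X,Y,Z) = g(X, N_A(Y,Z))` -/
def nij3 (A : V → V) : V → V → V → C := fun X Y Z => M.g X (M.nijV A Y Z)

/-- the induced inner product of two 2-forms,
`⟨ψ,φ⟩ = (1/2!) ψ(e_i,e_j) φ(e_i,e_j)` -/
def inner2 (ψ φ : V → V → C) : C :=
  (1/2 : ℝ) • ∑ i, ∑ j, ψ (M.frame i) (M.frame j) * φ (M.frame i) (M.frame j)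

/-- the contraction `(Λ_A β)(X) = ⟨X ⌟ β, ω_A⟩` of a three-form -/
def Lam (A : V → V) (β : V → V → V → C) : V → C :=
  fun X => (1/2 : ℝ) •
    ∑ i, ∑ j, β X (M.frame i) (M.frame j) * M.omega A (M.frame i) (M.frame j)

/-- `λ_I(X) = (1/2n) ⟨∇_X ω_J, ω_K⟩` -/
def lambdaI : V → C := fun X =>
  (1/(2*(n:ℝ))) • M.inner2 (fun Y Z => M.nab2 (M.omega M.J) X Y Z) (M.omega M.K)

/-- `λ_J(X) = (1/2n) ⟨∇_X ω_K, ω_I⟩` -/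
def lambdaJ : V → C := fun X =>
  (1/(2*(n:ℝ))) • M.inner2 (fun Y Z => M.nab2 (M.omega M.K) X Y Z) (M.omega M.I)

/-- `λ_K(X) = (1/2n) ⟨∇_X ω_I, ω_J⟩` -/
def lambdaK : V → C := fun X =>
  (1/(2*(n:ℝ))) • M.inner2 (fun Y Z => M.nab2 (M.omega M.I) X Y Z) (M.omega M.J)

/-- codifferential of a two-form -/
def codiff2 (ψ : V → V → C) : V → C := fun Z => -∑ i, M.nab2 ψ (M.frame i) (M.frame i) Z

/-- codifferential of a four-form -/
def codiff4 (ψ : V → V → V → V → C) : V → V → V → C :=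
  fun X Y Z => -∑ i, M.nab4 ψ (M.frame i) (M.frame i) X Y Z

/-- `β_I = J dω_J + K dω_K` -/
def betaI : V → V → V → C := fun X Y Z =>
  act3 M.J (M.d2 (M.omega M.J)) X Y Z + act3 M.K (M.d2 (M.omega M.K)) X Y Z

/-- `β_J = K dω_K + I dω_I` -/
def betaJ : V → V → V → C := fun X Y Z =>
  act3 M.K (M.d2 (M.omega M.K)) X Y Z + act3 M.I (M.d2 (M.omega M.I)) X Y Z

/-- `β_K = I dω_I + J dω_J` -/
def betaK : V → V → V → C := fun X Y Z =>
  act3 M.I (M.d2 (M.omega M.I)) X Y Z + act3 M.J (M.d2 (M.omega M.J)) X Y Z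

/-- the intrinsic torsion
`ξ_X Y = -(1/4) Σ_A A (∇_X A) Y + (1/2) Σ_A λ_A(X) A Y` -/
def xi : V → V → V := fun X Y =>
  (-(1/4 : ℝ)) • (M.I (M.nabA M.I X Y) + M.J (M.nabA M.J X Y) + M.K (M.nabA M.K X Y))
    + (1/2 : ℝ) • (M.lambdaI X • M.I Y + M.lambdaJ X • M.J Y + M.lambdaK X • M.K Y)

/-- the one-form `ν^I_4 = I Λ_I β_I` -/
def nu4I : V → C := act1 M.I (M.Lam M.I M.betaI)

/-- the one-form `ν^J_4 = J Λ_J β_J` -/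
def nu4J : V → C := act1 M.J (M.Lam M.J M.betaJ)

/-- the one-form `ν^K_4 = K Λ_K β_K` -/
def nu4K : V → C := act1 M.K (M.Lam M.K M.betaK)

/-- `ν^I_3`, determined by `J Λ_J β_I = (1/(2n-1)) (ν^I_4 + (2n+1)(n-1) ν^I_3)` -/
def nu3I : V → C := fun X =>
  (1/((2*(n:ℝ)+1) * ((n:ℝ)-1))) •
    ((2*(n:ℝ)-1) • act1 M.J (M.Lam M.J M.betaI) X - M.nu4I X)

/-- `ν^J_3`, determined by `K Λ_K β_J = (1/(2n-1)) (ν^J_4 + (2n+1)(n-1) ν^J_3)` -/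
def nu3J : V → C := fun X =>
  (1/((2*(n:ℝ)+1) * ((n:ℝ)-1))) •
    ((2*(n:ℝ)-1) • act1 M.K (M.Lam M.K M.betaJ) X - M.nu4J X)

/-- `ν^K_3`, determined by `I Λ_I β_K = (1/(2n-1)) (ν^K_4 + (2n+1)(n-1) ν^K_3)` -/
def nu3K : V → C := fun X =>
  (1/((2*(n:ℝ)+1) * ((n:ℝ)-1))) •
    ((2*(n:ℝ)-1) • act1 M.I (M.Lam M.I M.betaK) X - M.nu4K X)

/-- `β^{(E)}_{3I} = -(1/2) Jν^I_3 ∧ ω_J - (1/2) Kν^I_3 ∧ ω_K + (1/(2n-1)) Iν^I_3 ∧ ω_I` -/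
def betaE3I : V → V → V → C := fun X Y Z =>
  (-(1/2:ℝ)) • wedge12 (act1 M.J M.nu3I) (M.omega M.J) X Y Z
    + (-(1/2:ℝ)) • wedge12 (act1 M.K M.nu3I) (M.omega M.K) X Y Z
    + (1/(2*(n:ℝ)-1)) • wedge12 (act1 M.I M.nu3I) (M.omega M.I) X Y Z

def betaE3J : V → V → V → C := fun X Y Z =>
  (-(1/2:ℝ)) • wedge12 (act1 M.K M.nu3J) (M.omega M.K) X Y Z
    + (-(1/2:ℝ)) • wedge12 (act1 M.I M.nu3J) (M.omega M.I) X Y Z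
    + (1/(2*(n:ℝ)-1)) • wedge12 (act1 M.J M.nu3J) (M.omega M.J) X Y Z

def betaE3K : V → V → V → C := fun X Y Z =>
  (-(1/2:ℝ)) • wedge12 (act1 M.I M.nu3K) (M.omega M.I) X Y Z
    + (-(1/2:ℝ)) • wedge12 (act1 M.J M.nu3K) (M.omega M.J) X Y Z
    + (1/(2*(n:ℝ)-1)) • wedge12 (act1 M.K M.nu3K) (M.omega M.K) X Y Z

/-- `β_{4I} = -(1/(2n-1)) Iν^I_4 ∧ ω_I` -/
def beta4I : V → V → V → C := fun X Y Z =>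
  (-(1/(2*(n:ℝ)-1))) • wedge12 (act1 M.I M.nu4I) (M.omega M.I) X Y Z

def beta4J : V → V → V → C := fun X Y Z =>
  (-(1/(2*(n:ℝ)-1))) • wedge12 (act1 M.J M.nu4J) (M.omega M.J) X Y Z

def beta4K : V → V → V → C := fun X Y Z =>
  (-(1/(2*(n:ℝ)-1))) • wedge12 (act1 M.K M.nu4K) (M.omega M.K) X Y Z

/-- `β_I^{(3+K)} = β_I - β^{(E)}_{3I} - β_{4I}` -/
def beta3KI : V → V → V → C := fun X Y Z => M.betaI X Y Z - M.betaE3I X Y Z - M.beta4I X Y Z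

def beta3KJ : V → V → V → C := fun X Y Z => M.betaJ X Y Z - M.betaE3J X Y Z - M.beta4J X Y Z

def beta3KK : V → V → V → C := fun X Y Z => M.betaK X Y Z - M.betaE3K X Y Z - M.beta4K X Y Z

/-- `β_I^{(3)} = (1/6) (2 - 𝓛_J - 𝓛_K) β_I^{(3+K)}` -/
def beta3I : V → V → V → C := fun X Y Z =>
  (1/6:ℝ) • ((2:ℝ) • M.beta3KI X Y Z - calL M.J M.beta3KI X Y Z - calL M.K M.beta3KI X Y Z)

def beta3J : V → V → V → C := fun X Y Z =>
  (1/6:ℝ) • ((2:ℝ) • M.beta3KJ X Y Z - calL M.K M.beta3KJ X Y Z - calL M.I M.beta3KJ X Y Z)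

def beta3K : V → V → V → C := fun X Y Z =>
  (1/6:ℝ) • ((2:ℝ) • M.beta3KK X Y Z - calL M.I M.beta3KK X Y Z - calL M.J M.beta3KK X Y Z)

/-- `β_I^{(K)} = (1/6) (4 + 𝓛_J + 𝓛_K) β_I^{(3+K)}` -/
def betaKI : V → V → V → C := fun X Y Z =>
  (1/6:ℝ) • ((4:ℝ) • M.beta3KI X Y Z + calL M.J M.beta3KI X Y Z + calL M.K M.beta3KI X Y Z)

def betaKJ : V → V → V → C := fun X Y Z =>
  (1/6:ℝ) • ((4:ℝ) • M.beta3KJ X Y Z + calL M.K M.beta3KJ X Y Z + calL M.I M.beta3KJ X Y Z)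

def betaKK : V → V → V → C := fun X Y Z =>
  (1/6:ℝ) • ((4:ℝ) • M.beta3KK X Y Z + calL M.I M.beta3KK X Y Z + calL M.J M.beta3KK X Y Z)

/-- the three-form `ψ^{(3)} = (1/12)(β_I^{(3)} + β_J^{(3)} + β_K^{(3)})` determining `ξ_{33}` -/
def psi3 : V → V → V → C := fun X Y Z =>
  (1/12:ℝ) • (M.beta3I X Y Z + M.beta3J X Y Z + M.beta3K X Y Z)

/-- the three-form `ψ^{(K)} = -(1/48)(β_I^{(K)} + β_J^{(K)} + β_K^{(K)})` determining `ξ_{KH}` -/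
def psiK : V → V → V → C := fun X Y Z =>
  (-(1/48:ℝ)) • (M.betaKI X Y Z + M.betaKJ X Y Z + M.betaKK X Y Z)

/-- the three-form `ψ^{(3)}_I` determining `ξ_{3H}` -/
def psi3I : V → V → V → C := fun X Y Z =>
  (-(1/8:ℝ)) • M.beta3I X Y Z
    + (1/48:ℝ) • ((3:ℝ) • (M.beta3I X Y Z + M.beta3J X Y Z + M.beta3K X Y Z)
        + calL M.I (fun a b c => M.beta3I a b c + M.beta3J a b c + M.beta3K a b c) X Y Z)

def psi3J : V → V → V → C := fun X Y Z =>
  (-(1/8:ℝ)) • M.beta3J X Y Z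
    + (1/48:ℝ) • ((3:ℝ) • (M.beta3I X Y Z + M.beta3J X Y Z + M.beta3K X Y Z)
        + calL M.J (fun a b c => M.beta3I a b c + M.beta3J a b c + M.beta3K a b c) X Y Z)

def psi3K : V → V → V → C := fun X Y Z =>
  (-(1/8:ℝ)) • M.beta3K X Y Z
    + (1/48:ℝ) • ((3:ℝ) • (M.beta3I X Y Z + M.beta3J X Y Z + M.beta3K X Y Z)
        + calL M.K (fun a b c => M.beta3I a b c + M.beta3J a b c + M.beta3K a b c) X Y Z)

/-- the three-form `ψ^{(K)}_I` determining `ξ_{K3}` -/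
def psiKI : V → V → V → C := fun X Y Z =>
  (-(1/2:ℝ)) • M.betaKI X Y Z
    + (1/6:ℝ) • (M.betaKI X Y Z + M.betaKJ X Y Z + M.betaKK X Y Z)

def psiKJ : V → V → V → C := fun X Y Z =>
  (-(1/2:ℝ)) • M.betaKJ X Y Z
    + (1/6:ℝ) • (M.betaKI X Y Z + M.betaKJ X Y Z + M.betaKK X Y Z)

def psiKK : V → V → V → C := fun X Y Z =>
  (-(1/2:ℝ)) • M.betaKK X Y Z
    + (1/6:ℝ) • (M.betaKI X Y Z + M.betaKJ X Y Z + M.betaKK X Y Z)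

/-- the one-form `θ^ξ` determining `ξ_{EH}`,
defined by `(6/n)(2n+1)(n-1) θ^ξ(X) = -⟨ξ_{e_i} e_i, X⟩` -/
def thetaXi : V → C := fun X =>
  (-((n:ℝ)/(6*(2*(n:ℝ)+1)*((n:ℝ)-1)))) • ∑ i, M.g (M.xi (M.frame i) (M.frame i)) X

/-- the local one-form `θ^ξ_I`, defined by `(2/n)(2n+1)(n-1) θ^ξ_I(X) = -⟨I ξ_{e_i} I e_i, X⟩` -/
def thetaXiI : V → C := fun X =>
  (-((n:ℝ)/(2*(2*(n:ℝ)+1)*((n:ℝ)-1)))) •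
    ∑ i, M.g (M.I (M.xi (M.frame i) (M.I (M.frame i)))) X

def thetaXiJ : V → C := fun X =>
  (-((n:ℝ)/(2*(2*(n:ℝ)+1)*((n:ℝ)-1)))) •
    ∑ i, M.g (M.J (M.xi (M.frame i) (M.J (M.frame i)))) X

def thetaXiK : V → C := fun X =>
  (-((n:ℝ)/(2*(2*(n:ℝ)+1)*((n:ℝ)-1)))) •
    ∑ i, M.g (M.K (M.xi (M.frame i) (M.K (M.frame i)))) X

/-- `α_I = -λ_I ⊗ g + (1/2)(J_(2) - J_(3)) ∇ω_K` -/
def alphaI : V → V → V → C := fun X Y Z =>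
  -(M.lambdaI X * M.g Y Z)
    + (1/2:ℝ) • (-(M.nab2 (M.omega M.K) X (M.J Y) Z) + M.nab2 (M.omega M.K) X Y (M.J Z))

def alphaJ : V → V → V → C := fun X Y Z =>
  -(M.lambdaJ X * M.g Y Z)
    + (1/2:ℝ) • (-(M.nab2 (M.omega M.I) X (M.K Y) Z) + M.nab2 (M.omega M.I) X Y (M.K Z))

def alphaK : V → V → V → C := fun X Y Z =>
  -(M.lambdaK X * M.g Y Z)
    + (1/2:ℝ) • (-(M.nab2 (M.omega M.J) X (M.I Y) Z) + M.nab2 (M.omega M.J) X Y (M.I Z))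

/-- the one-form `η_I(X) = α_I(e_i; e_i, X)` -/
def etaI : V → C := fun X => ∑ i, M.alphaI (M.frame i) (M.frame i) X

def etaJ : V → C := fun X => ∑ i, M.alphaJ (M.frame i) (M.frame i) X

def etaK : V → C := fun X => ∑ i, M.alphaK (M.frame i) (M.frame i) X

/-- the fundamental four-form `Ω = Σ_A ω_A ∧ ω_A` -/
def Omega4 : V → V → V → V → C := fun X Y Z W =>
  wedge22 (M.omega M.I) (M.omega M.I) X Y Z W
    + wedge22 (M.omega M.J) (M.omega M.J) X Y Z W
    + wedge22 (M.omega M.K) (M.omega M.K) X Y Z W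

/-- the one-form `θ^{d*Ω} = (1/3) Σ_A A Λ_A d*Ω` -/
def thetaDOmega : V → C := fun X =>
  (1/3:ℝ) • (act1 M.I (M.Lam M.I (M.codiff4 M.Omega4)) X
    + act1 M.J (M.Lam M.J (M.codiff4 M.Omega4)) X
    + act1 M.K (M.Lam M.K (M.codiff4 M.Omega4)) X)

/-- the vector-valued torsion: `g(W, T(X,Y)) = T(W,X,Y)` -/
def Tvec (T : V → V → V → C) : V → V → V := fun X Y => ∑ i, T (M.frame i) X Y • M.frame i

/-- the connection `∇ + (1/2) T` associated to a torsion (0,3)-tensor `T` -/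
def nabT (T : V → V → V → C) : V → V → V := fun X Y => M.nab X Y + (1/2:ℝ) • M.Tvec T X Y

/-- a connection is metric -/
def MetricConn (nab' : V → V → V) : Prop :=
  ∀ X Y Z, M.D X (M.g Y Z) = M.g (nab' X Y) Z + M.g Y (nab' X Z)

/-- a connection is quaternionic, with associated local one-forms `γ_I, γ_J, γ_K`:
`∇'_X I = γ_K(X) J - γ_J(X) K`, and cyclically -/
def QuatConn (nab' : V → V → V) (γI γJ γK : V → C) : Prop :=
  (∀ X Y, nab' X (M.I Y) - M.I (nab' X Y) = γK X • M.J Y - γJ X • M.K Y) ∧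
  (∀ X Y, nab' X (M.J Y) - M.J (nab' X Y) = γI X • M.K Y - γK X • M.I Y) ∧
  (∀ X Y, nab' X (M.K Y) - M.K (nab' X Y) = γJ X • M.I Y - γI X • M.J Y)

/-- the HKT condition: `I, J, K` integrable and there is a metric connection
`∇ + (1/2)T` with totally skew torsion making `I, J, K` parallel -/
def IsHKT : Prop :=
  (∀ X Y, M.nijV M.I X Y = 0) ∧ (∀ X Y, M.nijV M.J X Y = 0) ∧
  (∀ X Y, M.nijV M.K X Y = 0) ∧
  ∃ T : V → V → V → C, IsAlt3 T ∧ Lin3 T ∧ M.MetricConn (M.nabT T) ∧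
    (∀ X Y, M.nabT T X (M.I Y) = M.I (M.nabT T X Y)) ∧
    (∀ X Y, M.nabT T X (M.J Y) = M.J (M.nabT T X Y)) ∧
    (∀ X Y, M.nabT T X (M.K Y) = M.K (M.nabT T X Y))

/-- membership of a three-form in `KH`: type `{2,1}` for each `A` and `Λ_A ψ = 0` -/
def InKH3 (ψ : V → V → V → C) : Prop :=
  IsAlt3 ψ ∧ Lin3 ψ ∧
  calL M.I ψ = ψ ∧ calL M.J ψ = ψ ∧ calL M.K ψ = ψ ∧
  M.Lam M.I ψ = 0 ∧ M.Lam M.J ψ = 0 ∧ M.Lam M.K ψ = 0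

/-- the `(0,3)`-tensor of the `KH`-component of the torsion determined by `ψ^{(K)}`:
`3ψ - Σ_A A_(23) ψ` -/
def xiKH3 (ψ : V → V → V → C) : V → V → V → C := fun X Y Z =>
  (3:ℝ) • ψ X Y Z - (op23 M.I ψ X Y Z + op23 M.J ψ X Y Z + op23 M.K ψ X Y Z)

/-- the `(0,3)`-tensor of the `EH`-component of the torsion determined by the
one-form `θ`: `3 e_i ⊗ e_i ∧ θ - Σ_A (e_i ⊗ A e_i ∧ A θ + (2/n) A θ ⊗ ω_A)` -/
def xiEH3 (θ : V → C) : V → V → V → C := fun X Y Z =>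
  (3:ℝ) • ∑ i, M.g (M.frame i) X *
      (M.g (M.frame i) Y * θ Z - M.g (M.frame i) Z * θ Y)
  - ((∑ i, M.g (M.frame i) X *
        (M.g (M.I (M.frame i)) Y * act1 M.I θ Z - M.g (M.I (M.frame i)) Z * act1 M.I θ Y))
    + (∑ i, M.g (M.frame i) X *
        (M.g (M.J (M.frame i)) Y * act1 M.J θ Z - M.g (M.J (M.frame i)) Z * act1 M.J θ Y))
    + (∑ i, M.g (M.frame i) X *
        (M.g (M.K (M.frame i)) Y * act1 M.K θ Z - M.g (M.K (M.frame i)) Z * act1 M.K θ Y)))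
  - (2/(n:ℝ)) • (act1 M.I θ X * M.omega M.I Y Z + act1 M.J θ X * M.omega M.J Y Z
      + act1 M.K θ X * M.omega M.K Y Z)

/-- the intrinsic torsion lies in `(K+E)H`: it is the sum of a `KH`-tensor and an
`EH`-tensor as described in §3 of the paper -/
def inKEH : Prop :=
  ∃ (ψ : V → V → V → C) (θ : V → C), M.InKH3 ψ ∧ Lin1 θ ∧
    ∀ X Y Z, M.g Y (M.xi X Z) = M.xiKH3 ψ X Y Z + M.xiEH3 θ X Y Z

end derived

end AQH


namespace AQH

section helpers

variable {n : ℕ} {C V : Type*} [CommRing C] [Algebra ℝ C] [AddCommGroup V] [Module C V]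

variable (M : AQH n C V)

theorem addLin {A : V → V} (h : ∀ (f : C) X Y, A (f • X + Y) = f • A X + A Y) (X Y : V) :
    A (X + Y) = A X + A Y := by simpa using h 1 X Y

theorem zeroLin {A : V → V} (h : ∀ (f : C) X Y, A (f • X + Y) = f • A X + A Y) :
    A 0 = 0 := by simpa using addLin h 0 0

theorem smulLin {A : V → V} (h : ∀ (f : C) X Y, A (f • X + Y) = f • A X + A Y) (f : C) (X : V) :
    A (f • X) = f • A X := by simpa [zeroLin h] using h f X 0

theorem negLin {A : V → V} (h : ∀ (f : C) X Y, A (f • X + Y) = f • A X + A Y) (X : V) :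
    A (-X) = -A X := by simpa using smulLin h (-1) X

theorem subLin {A : V → V} (h : ∀ (f : C) X Y, A (f • X + Y) = f • A X + A Y) (X Y : V) :
    A (X - Y) = A X - A Y := by rw [sub_eq_add_neg, addLin h, negLin h, sub_eq_add_neg]

theorem g_neg (X Y : V) : M.g (-X) Y = -M.g X Y := by
  simpa using M.g_smul (-1) X Y

theorem g_sub (X Y Z : V) : M.g (X - Y) Z = M.g X Z - M.g Y Z := by
  rw [sub_eq_add_neg, M.g_add, M.g_neg, sub_eq_add_neg]

theorem g_add' (X Y Z : V) : M.g Z (X + Y) = M.g Z X + M.g Z Y := by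
  rw [M.g_symm, M.g_add, M.g_symm X, M.g_symm Y]

theorem g_smul' (f : C) (X Z : V) : M.g Z (f • X) = f * M.g Z X := by
  rw [M.g_symm, M.g_smul, M.g_symm X]

theorem g_neg' (X Z : V) : M.g Z (-X) = -M.g Z X := by
  rw [M.g_symm, M.g_neg, M.g_symm X]

theorem g_sub' (X Y Z : V) : M.g Z (X - Y) = M.g Z X - M.g Z Y := by
  rw [M.g_symm, M.g_sub, M.g_symm X, M.g_symm Y]

theorem D_zero (X : V) : M.D X 0 = 0 := by simpa using M.D_add X 0 0

theorem D_neg (X : V) (f : C) : M.D X (-f) = -M.D X f := by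
  have := M.D_add X f (-f)
  rw [add_neg_cancel, D_zero] at this
  linear_combination -this

theorem nab_zero (X : V) : M.nab X 0 = 0 := by simpa using M.nab_add X 0 0

theorem nab_neg (X Y : V) : M.nab X (-Y) = -M.nab X Y := by
  have := M.nab_add X Y (-Y)
  rw [add_neg_cancel, nab_zero] at this
  exact (neg_eq_of_add_eq_zero_right this.symm).symm

theorem I_skew (X Y : V) : M.g (M.I X) Y = -M.g X (M.I Y) := by
  rw [← M.I_metric X (M.I Y), M.I_sq, M.g_neg', neg_neg]

theorem J_skew (X Y : V) : M.g (M.J X) Y = -M.g X (M.J Y) := by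
  rw [← M.J_metric X (M.J Y), M.J_sq, M.g_neg', neg_neg]

theorem K_skew (X Y : V) : M.g (M.K X) Y = -M.g X (M.K Y) := by
  rw [M.K_def, M.K_def, M.I_skew, M.J_skew, M.anticomm Y, M.g_neg', neg_neg]

theorem nabA_skew {A : V → V} (h : ∀ X Y, M.g (A X) Y = -M.g X (A Y)) (X Y Z : V) :
    M.g (M.nabA A X Y) Z = -M.g Y (M.nabA A X Z) := by
  have h1 := M.nab_metric X (A Y) Z
  have h2 := M.nab_metric X Y (A Z)
  rw [h Y Z, M.D_neg] at h1
  unfold nabA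
  rw [M.g_sub, M.g_sub', h (M.nab X Y)]
  have h3 := h Y (M.nab X Z)
  linear_combination -h1 - h2 - h3

theorem half_zero {x : C} (h : x = -x) : x = 0 := by
  have h2 : (2 : ℝ) • x = 0 := by rw [two_smul]; linear_combination h
  have := congrArg (fun y => (1/2 : ℝ) • y) h2
  simpa [smul_smul] using this

theorem skew_diag {B : V → V} (h : ∀ X Y, M.g (B X) Y = -M.g X (B Y)) (Y : V) :
    M.g (B Y) Y = 0 := by
  apply half_zero
  conv_lhs => rw [h, M.g_symm]

theorem aI (X Y : V) : M.nabA M.I X (M.I Y) = -M.I (M.nabA M.I X Y) := by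
  simp only [nabA, M.I_sq, subLin M.I_lin, nab_neg]; abel

theorem bJ (X Y : V) : M.nabA M.J X (M.J Y) = -M.J (M.nabA M.J X Y) := by
  simp only [nabA, M.J_sq, subLin M.J_lin, nab_neg]; abel

theorem JI (Y : V) : M.J (M.I Y) = -M.I (M.J Y) := by rw [M.anticomm, neg_neg]

theorem bI (X Y : V) : M.nabA M.J X (M.I Y) = -M.I (M.nabA M.J X Y) - M.nabA M.I X (M.J Y)
    - M.J (M.nabA M.I X Y) := by
  simp only [nabA, M.JI, subLin M.I_lin, subLin M.J_lin, nab_neg]; abel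

theorem cEq (X Y : V) : M.nabA M.K X Y = M.nabA M.I X (M.J Y) + M.I (M.nabA M.J X Y) := by
  simp only [nabA, M.K_def, subLin M.I_lin]; abel

theorem nabA_lin {A : V → V} (h : ∀ (f : C) X Y, A (f • X + Y) = f • A X + A Y) (Z : V)
    (f : C) (X Y : V) :
    M.nabA A Z (f • X + Y) = f • M.nabA A Z X + M.nabA A Z Y := by
  simp only [nabA, h, M.nab_add, M.nab_leibniz, smulLin h, addLin h]; module

theorem sum_frame (X Y : V) :
    ∑ i, M.g (M.frame i) X * M.g (M.frame i) Y = M.g X Y := by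
  have hs : ∀ s : Finset (Fin (4*n)), M.g (∑ i ∈ s, M.g X (M.frame i) • M.frame i) Y
      = ∑ i ∈ s, M.g (M.frame i) X * M.g (M.frame i) Y := by
    intro s
    induction s using Finset.induction_on with
    | empty => simpa using M.g_smul 0 0 Y
    | insert a s ha ih =>
      rw [Finset.sum_insert ha, Finset.sum_insert ha, M.g_add, M.g_smul, ih, M.g_symm X]
  rw [← hs, ← M.frame_span]

theorem nab2_omega (A : V → V) (X Y Z : V) :
    M.nab2 (M.omega A) X Y Z = M.g Y (M.nabA A X Z) := by
  simp only [nab2, omega, nabA, M.g_sub']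
  rw [M.nab_metric]; ring

theorem inner2_eq (A B : V → V) (X : V) :
    M.inner2 (fun Y Z => M.nab2 (M.omega A) X Y Z) (M.omega B)
      = (1/2 : ℝ) • ∑ i, M.g (M.nabA A X (M.frame i)) (B (M.frame i)) := by
  unfold inner2
  rw [Finset.sum_comm]
  simp only [nab2_omega, omega, M.sum_frame]

theorem lam_eq (hn : 1 < n) {x S : C}
    (h : x = (1/(2*(n:ℝ))) • ((1/2 : ℝ) • S)) : S = (4 * n : C) * x := by
  have hn' : (n : ℝ) ≠ 0 := by positivity
  have : S = (4 * (n:ℝ)) • x := by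
    rw [h, smul_smul, smul_smul, mul_assoc]
    have : 4 * (n:ℝ) * (1/(2*(n:ℝ)) * (1/2)) = 1 := by field_simp; norm_num
    rw [this, one_smul]
  rw [this, Algebra.smul_def, map_mul, map_natCast]
  have h4 : algebraMap ℝ C 4 = 4 := map_ofNat _ 4
  rw [h4]

theorem frame_norm (i : Fin (4*n)) : M.g (M.frame i) (M.frame i) = 1 := by
  simp [M.frame_orthonormal]

theorem quarter : (algebraMap ℝ C (1/4)) * 4 = 1 := by
  have : (4 : C) = algebraMap ℝ C 4 := (map_ofNat _ 4).symm
  rw [this, ← map_mul]; norm_num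

theorem halfq : (algebraMap ℝ C (1/2)) = 2 * algebraMap ℝ C (1/4) := by
  have : (2 : C) = algebraMap ℝ C 2 := (map_ofNat _ 2).symm
  rw [this, ← map_mul]; norm_num

variable [Module ℝ V] [IsScalarTower ℝ C V]

theorem xi_eq (X Y : V) : M.xi X Y =
    (-(algebraMap ℝ C (1/4))) • (M.I (M.nabA M.I X Y) + M.J (M.nabA M.J X Y)
      + M.K (M.nabA M.K X Y))
    + (2 * algebraMap ℝ C (1/4)) • (M.lambdaI X • M.I Y + M.lambdaJ X • M.J Y
      + M.lambdaK X • M.K Y) := by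
  rw [xi, ← algebraMap_smul C (-(1/4) : ℝ), ← algebraMap_smul C ((1/2) : ℝ), map_neg, halfq]

end helpers

end AQH

open AQH in
/-- For an almost quaternion-Hermitian `4n`-manifold with `n > 1`,
`∇^aqH = ∇ + ξ` (with `ξ` as in `AQH.xi`) is the minimal `Sp(n)Sp(1)`-connection:
it is metric, quaternionic with one-forms `λ_A`, and `ξ` takes values in
`T*M ⊗ (sp(n)+sp(1))^⊥`. -/
theorem statement0 {n : ℕ} {C V : Type*} [CommRing C] [Algebra ℝ C] [AddCommGroup V]
    [Module C V] [Module ℝ V] [IsScalarTower ℝ C V]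
    (hn : 1 < n) (M : AQH n C V) :
    -- (1) `∇^aqH = ∇ + ξ` is a metric connection: `∇^aqH g = 0`
    (∀ X Y Z, M.D X (M.g Y Z) =
        M.g (M.nab X Y + M.xi X Y) Z + M.g Y (M.nab X Z + M.xi X Z)) ∧
    -- (2) `(∇^aqH_X I) Y = λ_K(X) J Y - λ_J(X) K Y`, and cyclic permutations
    (∀ X Y, (M.nab X (M.I Y) + M.xi X (M.I Y)) - M.I (M.nab X Y + M.xi X Y)
        = M.lambdaK X • M.J Y - M.lambdaJ X • M.K Y) ∧
    (∀ X Y, (M.nab X (M.J Y) + M.xi X (M.J Y)) - M.J (M.nab X Y + M.xi X Y)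
        = M.lambdaI X • M.K Y - M.lambdaK X • M.I Y) ∧
    (∀ X Y, (M.nab X (M.K Y) + M.xi X (M.K Y)) - M.K (M.nab X Y + M.xi X Y)
        = M.lambdaJ X • M.I Y - M.lambdaI X • M.J Y) ∧
    -- (3) `ξ ∈ T*M ⊗ (sp(n)+sp(1))^⊥`:
    --     `Σ_A A ξ_X (A Y) = ξ_X Y` and `Σ_i ⟨ξ_X e_i, A e_i⟩ = 0` for `A = I, J, K`
    (∀ X Y, M.I (M.xi X (M.I Y)) + M.J (M.xi X (M.J Y)) + M.K (M.xi X (M.K Y))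
        = M.xi X Y) ∧
    (∀ X, ∑ i, M.g (M.xi X (M.frame i)) (M.I (M.frame i)) = 0) ∧
    (∀ X, ∑ i, M.g (M.xi X (M.frame i)) (M.J (M.frame i)) = 0) ∧
    (∀ X, ∑ i, M.g (M.xi X (M.frame i)) (M.K (M.frame i)) = 0) := by
  have hq := quarter (C := C)
  set q := algebraMap ℝ C (1/4) with hqd
  have aL := fun X => M.nabA_lin M.I_lin X
  have bL := fun X => M.nabA_lin M.J_lin X
  have xe := M.xi_eq
  rw [← hqd] at xe
  have ka := fun X => M.nabA_skew M.I_skew X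
  have kb := fun X => M.nabA_skew M.J_skew X
  have kc := fun X => M.nabA_skew M.K_skew X
  have sI : ∀ X, ∑ i, M.g (M.nabA M.J X (M.frame i)) (M.K (M.frame i))
      = (4 * n : C) * M.lambdaI X := fun X => lam_eq hn (by rw [lambdaI, inner2_eq])
  have sJ : ∀ X, ∑ i, M.g (M.nabA M.K X (M.frame i)) (M.I (M.frame i))
      = (4 * n : C) * M.lambdaJ X := fun X => lam_eq hn (by rw [lambdaJ, inner2_eq])
  have sK : ∀ X, ∑ i, M.g (M.nabA M.I X (M.frame i)) (M.J (M.frame i))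
      = (4 * n : C) * M.lambdaK X := fun X => lam_eq hn (by rw [lambdaK, inner2_eq])
  have card : ∀ f : C, ∑ _i : Fin (4*n), f = (4 * n : C) * f := by
    intro f; simp
  have da := fun X => M.skew_diag (ka X)
  have db := fun X => M.skew_diag (kb X)
  have dI := M.skew_diag M.I_skew
  have dJ := M.skew_diag M.J_skew
  have dK := M.skew_diag M.K_skew
  have IK : ∀ Y, M.I (M.K Y) = -M.J Y := fun Y => by rw [M.K_def, M.I_sq]
  have KI : ∀ Y, M.K (M.I Y) = M.J Y := fun Y => by
    rw [M.K_def, M.JI, negLin M.I_lin, M.I_sq, neg_neg]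
  have KJ : ∀ Y, M.K (M.J Y) = -M.I Y := fun Y => by
    rw [M.K_def, M.J_sq, negLin M.I_lin]
  have JK : ∀ Y, M.J (M.K Y) = M.I Y := fun Y => by
    rw [M.K_def, M.JI, M.J_sq, negLin M.I_lin, neg_neg]
  have JI : ∀ Y, M.J (M.I Y) = -M.K Y := fun Y => by rw [M.JI, M.K_def]
  have K_metric : ∀ Y Z, M.g (M.K Y) (M.K Z) = M.g Y Z := fun Y Z => by
    rw [M.K_def, M.K_def, M.I_metric, M.J_metric]
  have dc := fun X => M.skew_diag (kc X)
  have rI : ∀ X e, M.g (M.nabA M.K X e) (M.J e) = -M.g (M.nabA M.J X e) (M.K e) := by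
    intro X e
    rw [M.cEq, M.g_add, da, M.I_skew, M.K_def]; ring
  have rJ : ∀ X e, M.g (M.nabA M.I X e) (M.K e) = -M.g (M.nabA M.K X e) (M.I e) := by
    intro X e
    rw [M.cEq, M.g_add, M.I_metric, db, ka X (M.J e), M.aI, M.g_neg', M.g_symm (M.J e), M.I_skew,
      ← M.K_def]; ring
  have rK : ∀ X e, M.g (M.nabA M.J X e) (M.I e) = -M.g (M.nabA M.I X e) (M.J e) := by
    intro X e
    have h := kb X e (M.I e)
    rw [M.bI, M.g_sub', M.g_sub', M.g_neg'] at h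
    have h1 := M.I_skew e (M.nabA M.J X e)
    have h2 := ka X e (M.J e)
    have h3 := M.J_skew e (M.nabA M.I X e)
    rw [M.g_symm] at h1 h3
    have : M.g (M.nabA M.J X e) (M.I e) + M.g (M.nabA M.I X e) (M.J e) = 0 := by
      apply half_zero
      linear_combination h + h1 + h2 + h3
    linear_combination this
  have IJ : ∀ Y, M.I (M.J Y) = M.K Y := fun Y => (M.K_def Y).symm
  refine ⟨?_, ?_, ?_, ?_, ?_, ?_, ?_, ?_⟩
  · intro X Y Z
    have e1 : M.g (M.I (M.nabA M.I X Y)) Z = -M.g Y (M.I (M.nabA M.I X Z)) := by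
      rw [M.I_skew, ka, M.aI, M.g_neg', neg_neg]
    have e2 : M.g (M.J (M.nabA M.J X Y)) Z = -M.g Y (M.J (M.nabA M.J X Z)) := by
      rw [M.J_skew, kb, M.bJ, M.g_neg', neg_neg]
    have e3 : M.g (M.K (M.nabA M.K X Y)) Z = -M.g Y (M.K (M.nabA M.K X Z)) := by
      have : M.nabA M.K X (M.K Z) = -M.K (M.nabA M.K X Z) := by
        have hk : ∀ W, M.K (M.K W) = -W := by
          intro W
          simp only [M.K_def, M.JI, negLin M.I_lin, M.I_sq, M.J_sq, neg_neg]
        simp only [nabA, hk, subLin M.K_lin, nab_neg]; abel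
      rw [M.K_skew, kc, this, M.g_neg', neg_neg]
    rw [M.nab_metric, xe, xe]
    simp only [M.g_add, M.g_add', M.g_smul, M.g_smul', e1, e2, e3, M.I_skew, M.J_skew, M.K_skew]
    ring
  · intro X Y
    rw [← sub_eq_zero, xe, xe]
    have h : M.nab X (M.I Y) = M.nabA M.I X Y + M.I (M.nab X Y) := by simp [nabA]
    rw [h]
    simp only [M.cEq, M.K_def, M.JI, M.aI, M.bI, M.bJ, M.I_sq, M.J_sq, addLin M.I_lin,
      addLin M.J_lin, smulLin M.I_lin, smulLin M.J_lin, negLin M.I_lin, negLin M.J_lin,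
      subLin M.I_lin, subLin M.J_lin, addLin (aL X), smulLin (aL X), negLin (aL X), subLin (aL X),
      addLin (bL X), smulLin (bL X), negLin (bL X), subLin (bL X)]
    match_scalars <;> first
      | ring1
      | linear_combination hq
      | linear_combination -hq
      | linear_combination M.lambdaI X * hq
      | linear_combination -M.lambdaI X * hq
      | linear_combination M.lambdaJ X * hq
      | linear_combination -M.lambdaJ X * hq
      | linear_combination M.lambdaK X * hq
      | linear_combination -M.lambdaK X * hq
  · intro X Y
    rw [← sub_eq_zero, xe, xe]
    have h : M.nab X (M.J Y) = M.nabA M.J X Y + M.J (M.nab X Y) := by simp [nabA]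
    rw [h]
    simp only [M.cEq, M.K_def, M.JI, M.aI, M.bI, M.bJ, M.I_sq, M.J_sq, addLin M.I_lin,
      addLin M.J_lin, smulLin M.I_lin, smulLin M.J_lin, negLin M.I_lin, negLin M.J_lin,
      subLin M.I_lin, subLin M.J_lin, addLin (aL X), smulLin (aL X), negLin (aL X), subLin (aL X),
      addLin (bL X), smulLin (bL X), negLin (bL X), subLin (bL X)]
    match_scalars <;> first
      | ring1
      | linear_combination hq
      | linear_combination -hq
      | linear_combination M.lambdaI X * hq
      | linear_combination -M.lambdaI X * hq
      | linear_combination M.lambdaJ X * hq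
      | linear_combination -M.lambdaJ X * hq
      | linear_combination M.lambdaK X * hq
      | linear_combination -M.lambdaK X * hq
  · intro X Y
    rw [← sub_eq_zero, xe, xe]
    have h : M.nab X (M.K Y) = M.nabA M.K X Y + M.K (M.nab X Y) := by simp [nabA]
    rw [h]
    simp only [M.cEq, M.K_def, M.JI, M.aI, M.bI, M.bJ, M.I_sq, M.J_sq, addLin M.I_lin,
      addLin M.J_lin, smulLin M.I_lin, smulLin M.J_lin, negLin M.I_lin, negLin M.J_lin,
      subLin M.I_lin, subLin M.J_lin, addLin (aL X), smulLin (aL X), negLin (aL X), subLin (aL X),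
      addLin (bL X), smulLin (bL X), negLin (bL X), subLin (bL X)]
    match_scalars <;> first
      | ring1
      | linear_combination hq
      | linear_combination -hq
      | linear_combination M.lambdaI X * hq
      | linear_combination -M.lambdaI X * hq
      | linear_combination M.lambdaJ X * hq
      | linear_combination -M.lambdaJ X * hq
      | linear_combination M.lambdaK X * hq
      | linear_combination -M.lambdaK X * hq
  · intro X Y
    rw [← sub_eq_zero, xe, xe, xe, xe]
    simp only [M.cEq, M.K_def, M.JI, M.aI, M.bI, M.bJ, M.I_sq, M.J_sq, addLin M.I_lin,
      addLin M.J_lin, smulLin M.I_lin, smulLin M.J_lin, negLin M.I_lin, negLin M.J_lin,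
      subLin M.I_lin, subLin M.J_lin, addLin (aL X), smulLin (aL X), negLin (aL X), subLin (aL X),
      addLin (bL X), smulLin (bL X), negLin (bL X), subLin (bL X)]
    match_scalars <;> first
      | ring1
      | linear_combination hq
      | linear_combination -hq
      | linear_combination M.lambdaI X * hq
      | linear_combination -M.lambdaI X * hq
      | linear_combination M.lambdaJ X * hq
      | linear_combination -M.lambdaJ X * hq
      | linear_combination M.lambdaK X * hq
      | linear_combination -M.lambdaK X * hq
  · intro X
    have e : ∀ i, M.g (M.xi X (M.frame i)) (M.I (M.frame i))
        = -q * (2 * M.g (M.nabA M.J X (M.frame i)) (M.K (M.frame i)))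
          + 2 * q * M.lambdaI X := by
      intro i
      have hN := M.frame_norm i
      rw [xe]
      generalize M.frame i = e at *
      have t1 : M.g (M.I (M.nabA M.I X e)) (M.I e) = 0 := by
        rw [M.I_metric, da]
      have t2 : M.g (M.J (M.nabA M.J X e)) (M.I e)
          = M.g (M.nabA M.J X e) (M.K e) := by
        rw [M.J_skew, JI, M.g_neg', neg_neg]
      have t3 : M.g (M.K (M.nabA M.K X e)) (M.I e)
          = M.g (M.nabA M.J X e) (M.K e) := by
        have := rI X e
        rw [M.K_skew, KI]
        linear_combination -this
      have t4 : M.g (M.I e) (M.I e) = 1 := by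
        rw [M.I_metric, hN]
      have t5 : M.g (M.J e) (M.I e) = 0 := by
        rw [M.J_skew, JI, M.g_neg', M.g_symm, dK]; simp
      have t6 : M.g (M.K e) (M.I e) = 0 := by rw [M.K_skew, KI, M.g_symm, dJ]; simp
      simp only [M.g_add, M.g_smul]
      rw [t1, t2, t3, t4, t5, t6]
      ring
    simp only [e, Finset.sum_add_distrib, ← Finset.mul_sum, sI, card]
    ring
  · intro X
    have e : ∀ i, M.g (M.xi X (M.frame i)) (M.J (M.frame i))
        = -q * (2 * M.g (M.nabA M.K X (M.frame i)) (M.I (M.frame i)))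
          + 2 * q * M.lambdaJ X := by
      intro i
      have hN := M.frame_norm i
      rw [xe]
      generalize M.frame i = e at *
      have t1 : M.g (M.J (M.nabA M.J X e)) (M.J e) = 0 := by
        rw [M.J_metric, db]
      have t2 : M.g (M.K (M.nabA M.K X e)) (M.J e)
          = M.g (M.nabA M.K X e) (M.I e) := by
        rw [M.K_skew, KJ, M.g_neg', neg_neg]
      have t3 : M.g (M.I (M.nabA M.I X e)) (M.J e)
          = M.g (M.nabA M.K X e) (M.I e) := by
        have := rJ X e
        rw [M.I_skew, IJ]
        linear_combination -this
      have t4 : M.g (M.J e) (M.J e) = 1 := by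
        rw [M.J_metric, hN]
      have t5 : M.g (M.K e) (M.J e) = 0 := by
        rw [M.K_skew, KJ, M.g_neg', M.g_symm, dI]; simp
      have t6 : M.g (M.I e) (M.J e) = 0 := by rw [M.I_skew, IJ, M.g_symm, dK]; simp
      simp only [M.g_add, M.g_smul]
      rw [t1, t2, t3, t4, t5, t6]
      ring
    simp only [e, Finset.sum_add_distrib, ← Finset.mul_sum, sJ, card]
    ring
  · intro X
    have e : ∀ i, M.g (M.xi X (M.frame i)) (M.K (M.frame i))
        = -q * (2 * M.g (M.nabA M.I X (M.frame i)) (M.J (M.frame i)))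
          + 2 * q * M.lambdaK X := by
      intro i
      have hN := M.frame_norm i
      rw [xe]
      generalize M.frame i = e at *
      have t1 : M.g (M.K (M.nabA M.K X e)) (M.K e) = 0 := by
        rw [K_metric, dc]
      have t2 : M.g (M.I (M.nabA M.I X e)) (M.K e)
          = M.g (M.nabA M.I X e) (M.J e) := by
        rw [M.I_skew, IK, M.g_neg', neg_neg]
      have t3 : M.g (M.J (M.nabA M.J X e)) (M.K e)
          = M.g (M.nabA M.I X e) (M.J e) := by
        have := rK X e
        rw [M.J_skew, JK]
        linear_combination -this
      have t4 : M.g (M.K e) (M.K e) = 1 := by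
        rw [K_metric, hN]
      have t5 : M.g (M.I e) (M.K e) = 0 := by
        rw [M.I_skew, IK, M.g_neg', M.g_symm, dJ]; simp
      have t6 : M.g (M.J e) (M.K e) = 0 := by rw [M.J_skew, JK, M.g_symm, dI]; simp
      simp only [M.g_add, M.g_smul]
      rw [t1, t2, t3, t4, t5, t6]
      ring
    simp only [e, Finset.sum_add_distrib, ← Finset.mul_sum, sK, card]
    ring
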